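/- Let Q ≥ 1 and let M be a symmetric Q × Q real matrix. Then there exists a constant C > 0 such that for every n ≥ 2 there is a natural number m ≤ C·n^{log₂(2^Q − 1)/Q} and a symmetric function G : {0,1}^m × {0,1}^m → {0,1} with the property: for every tuple of points x_1, …, x_n ∈ ℝ^Q there exists F : {1,…,n} → {0,1}^m such that for all i ≠ j, G(F(i), F(j)) = 1 if and only if x_iᵀ M x_j ≥ 0. Note that log₂(2^Q − 1)/Q < 1, so m = O(n^{1−ε}) with ε = 1 − log₂(2^Q − 1)/Q > 0. -/

import Mathlib

open Matrix

/-!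
Listing the neighborhoods of all vertices in some order, a vertex can be labelled by the position of
its own neighborhood and by the sequence telling which neighborhoods contain it. A sequence that
changes value at most `c` times costs only about `c * log n` bits, so everything depends on an
ordering along which every vertex enters and leaves few neighborhoods.

For vectors `x i` in dimension `d` and a symmetric bilinear form, the neighborhoods have the shape
`{i | 0 ≤ φ (x i)}` with `φ` linear, and a shattered set of indices gives linearly independent
vectors: a nontrivial dependence is refuted by the functional whose signs match its coefficients.
Hence the VC dimension is at most `d`, and Welzl's argument applies. By the Sauer-Shelah lemma, some
two among `r` neighborhoods are separated by only a fraction of about `r ^ (-1 / d)` of the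
vertices, since otherwise a small random sample of vertices would tell all of them apart. Making
the two adjacent, reweighting and repeating yields an ordering with about `n ^ (1 - 1 / d)`
crossings per vertex. The exponent of the theorem exceeds `1 - 1 / d` if `2 ≤ d`, which absorbs the
logarithms; for `d = 1` two signs per vertex are label enough.
-/

namespace ImplicitRepresentation

open Finset
open scoped symmDiff

/-! ### Powers and logarithms -/

lemma exists_nat_add_one_lt_and_le_add_two {y : ℝ} (hy : 1 < y) :
    ∃ s : ℕ, (s : ℝ) + 1 < y ∧ y ≤ s + 2 := by
  have hceil : 2 ≤ ⌈y⌉₊ := Nat.lt_ceil.2 (mod_cast hy)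
  obtain ⟨s, hs⟩ := Nat.exists_eq_add_of_le' hceil
  exact ⟨s, mod_cast Nat.lt_ceil.1 (show s + 1 < ⌈y⌉₊ by lia), mod_cast hs ▸ Nat.le_ceil y⟩

lemma one_sub_pow_mul_sq_lt_one {δ x : ℝ} (hδ : δ ≤ 1) (hx : 0 < x) {s : ℕ}
    (h : 2 * Real.log x < δ * s) : (1 - δ) ^ s * x ^ 2 < 1 := by
  calc (1 - δ) ^ s * x ^ 2 ≤ Real.exp (-δ) ^ s * Real.exp (Real.log x) ^ 2 := by
        rw [Real.exp_log hx]
        exact mul_le_mul_of_nonneg_right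
          (pow_le_pow_left₀ (sub_nonneg.2 hδ) (Real.one_sub_le_exp_neg δ) s) (sq_nonneg x)
    _ = Real.exp (2 * Real.log x - δ * s) := by
        rw [← Real.exp_nat_mul, ← Real.exp_nat_mul, ← Real.exp_add]
        push_cast
        ring_nf
    _ < 1 := Real.exp_lt_one_iff.2 (sub_neg.2 h)

lemma mul_rpow_sub_one_le_rpow_sub_rpow {β x : ℝ} (hβ : 0 ≤ β) (hβ1 : β ≤ 1) (hx : 0 ≤ x) :
    β * (x + 1) ^ (β - 1) ≤ (x + 1) ^ β - x ^ β := by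
  have hx1 : 0 < x + 1 := by positivity
  have hbernoulli : (x / (x + 1)) ^ β ≤ 1 + β * (-1 / (x + 1)) := by
    convert rpow_one_add_le_one_add_mul_self (s := -1 / (x + 1)) ?_ hβ hβ1 using 2
    · field_simp
      ring
    · rw [le_div_iff₀ hx1]
      linarith
  rw [Real.div_rpow hx hx1.le, div_le_iff₀ (by positivity)] at hbernoulli
  rw [Real.rpow_sub_one hx1.ne', ← sub_nonneg]
  calc 0 ≤ (1 + β * (-1 / (x + 1))) * (x + 1) ^ β - x ^ β := sub_nonneg.2 hbernoulli
    _ = (x + 1) ^ β - x ^ β - β * ((x + 1) ^ β / (x + 1)) := by ring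

lemma sum_natCast_rpow_sub_one_le {β : ℝ} (hβ : 0 < β) (hβ1 : β ≤ 1) (n : ℕ) :
    ∑ j ∈ range n, ((j + 1 : ℕ) : ℝ) ^ (β - 1) ≤ (n : ℝ) ^ β / β := by
  rw [le_div_iff₀' hβ, mul_sum]
  calc ∑ j ∈ range n, β * ((j + 1 : ℕ) : ℝ) ^ (β - 1)
      ≤ ∑ j ∈ range n, (((j + 1 : ℕ) : ℝ) ^ β - (j : ℝ) ^ β) :=
        sum_le_sum fun j _ ↦ by
          exact_mod_cast mul_rpow_sub_one_le_rpow_sub_rpow hβ.le hβ1 j.cast_nonneg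
    _ = (n : ℝ) ^ β := by
        rw [sum_range_sub (fun j : ℕ ↦ (j : ℝ) ^ β), Nat.cast_zero, Real.zero_rpow hβ.ne', sub_zero]

lemma natCast_le_mul_rpow_of_two_pow_le {c : ℕ} {K β x : ℝ} (hβ : 0 < β) (hx : 1 ≤ x)
    (hc : 2 ^ c ≤ 2 * Real.exp (K * x ^ β) * x) :
    c ≤ (1 + (K + 1 / β) / Real.log 2) * x ^ β := by
  have hlog2 : 0 < Real.log 2 := Real.log_pos one_lt_two
  have hlog : c * Real.log 2 ≤ Real.log 2 + K * x ^ β + Real.log x := by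
    have := Real.log_le_log (by positivity) hc
    rwa [Real.log_mul (by positivity) (by positivity), Real.log_mul (by positivity) (by positivity),
      Real.log_exp, Real.log_pow] at this
  refine le_of_mul_le_mul_right ?_ hlog2
  calc c * Real.log 2 ≤ Real.log 2 * 1 + K * x ^ β + Real.log x := by rwa [mul_one]
    _ ≤ Real.log 2 * x ^ β + K * x ^ β + x ^ β / β := by
        gcongr
        · exact Real.one_le_rpow hx hβ.le
        · exact Real.log_le_rpow_div (by positivity) hβ
    _ = (1 + (K + 1 / β) / Real.log 2) * x ^ β * Real.log 2 := by
        field_simp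
        ring

lemma exists_natClog_add_two_le_rpow {ε : ℝ} (hε : 0 < ε) :
    ∃ K : ℝ, 0 < K ∧ ∀ n : ℕ, n ≠ 0 → (Nat.clog 2 (n + 2) : ℝ) ≤ K * (n : ℝ) ^ ε := by
  refine ⟨3 ^ ε / ε / Real.log 2 + 1, by positivity, fun n hn ↦ ?_⟩
  have hn1 : (1 : ℝ) ≤ n := mod_cast Nat.one_le_iff_ne_zero.2 hn
  have hlog : Real.log (n + 2) ≤ 3 ^ ε / ε * (n : ℝ) ^ ε := by
    calc Real.log (n + 2) ≤ (n + 2 : ℝ) ^ ε / ε := Real.log_le_rpow_div (by positivity) hε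
      _ ≤ (3 * n : ℝ) ^ ε / ε := by gcongr; linarith
      _ = 3 ^ ε / ε * (n : ℝ) ^ ε := by rw [Real.mul_rpow zero_le_three n.cast_nonneg]; ring
  calc (Nat.clog 2 (n + 2) : ℝ) ≤ Real.log (n + 2) / Real.log 2 + 1 := by
        have := Real.natCeil_logb_natCast 2 (n + 2)
        push_cast at this
        rw [← this]
        exact (Nat.ceil_lt_add_one (Real.logb_nonneg one_lt_two (by linarith))).le
    _ ≤ 3 ^ ε / ε * (n : ℝ) ^ ε / Real.log 2 + (n : ℝ) ^ ε := by
        gcongr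
        exact Real.one_le_rpow hn1 hε.le
    _ = (3 ^ ε / ε / Real.log 2 + 1) * (n : ℝ) ^ ε := by ring

lemma one_sub_one_div_natCast_nonneg (d : ℕ) : 0 ≤ 1 - 1 / (d : ℝ) := by
  rcases d.eq_zero_or_pos with rfl | hd
  · simp
  · rw [sub_nonneg, div_le_one (by positivity)]
    exact_mod_cast hd

lemma one_sub_one_div_lt_logb_two_pow_sub_one_div {d : ℕ} (hd : 2 ≤ d) :
    1 - 1 / (d : ℝ) < Real.logb 2 (2 ^ d - 1) / d := by
  have hd0 : (0 : ℝ) < d := by positivity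
  obtain ⟨k, rfl⟩ : ∃ k, d = k + 1 := ⟨d - 1, by lia⟩
  have hk : (1 : ℝ) < 2 ^ k := one_lt_pow₀ one_lt_two (by lia)
  have hlog : (k : ℝ) < Real.logb 2 (2 ^ (k + 1) - 1) := by
    rw [Real.lt_logb_iff_rpow_lt one_lt_two (by rw [pow_succ]; linarith), Real.rpow_natCast,
      pow_succ]
    linarith
  rw [one_sub_div hd0.ne']
  gcongr
  simpa using hlog

/-! ### Close pairs in set systems of bounded VC dimension -/

section Packing

lemma card_filter_powerset_card_le {α : Type*} (T : Finset α) (d : ℕ) :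
    #{B ∈ T.powerset | #B ≤ d} ≤ (#T + 1) ^ d := by
  classical
  calc #{B ∈ T.powerset | #B ≤ d}
      ≤ #((range (d + 1)).biUnion fun k ↦ T.powersetCard k) := by
        refine card_le_card fun B hB ↦ ?_
        obtain ⟨hBT, hBd⟩ := mem_filter.1 hB
        exact mem_biUnion.2 ⟨#B, mem_range.2 (Nat.lt_succ_of_le hBd),
          mem_powersetCard.2 ⟨mem_powerset.1 hBT, rfl⟩⟩
    _ ≤ ∑ k ∈ range (d + 1), (#T).choose k := by
        simpa only [card_powersetCard] using
          card_biUnion_le (s := range (d + 1)) (t := fun k ↦ T.powersetCard k)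
    _ ≤ ∑ k ∈ range (d + 1), #T ^ k * 1 ^ (d - k) * d.choose k := by
        refine sum_le_sum fun k hk ↦ ?_
        rw [one_pow, mul_one]
        exact (Nat.choose_le_pow _ _).trans
          (Nat.le_mul_of_pos_right _ (Nat.choose_pos (Nat.lt_succ_iff.1 (mem_range.1 hk))))
    _ = (#T + 1) ^ d := .symm <| add_pow ..

variable {κ : Type*} [DecidableEq κ]

lemma subset_and_shatters_of_shatters_image_inter {𝒜 : Finset (Finset κ)} {T B : Finset κ}
    (hB : (𝒜.image (T ∩ ·)).Shatters B) : B ⊆ T ∧ 𝒜.Shatters B := by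
  have hBT : B ⊆ T := by
    obtain ⟨_, hA, hBA⟩ := hB.exists_superset
    obtain ⟨A, -, rfl⟩ := mem_image.1 hA
    exact hBA.trans inter_subset_left
  refine ⟨hBT, fun t ht ↦ ?_⟩
  obtain ⟨_, hA, rfl⟩ := hB ht
  obtain ⟨A, hA𝒜, rfl⟩ := mem_image.1 hA
  exact ⟨A, hA𝒜, by rw [← inter_assoc, inter_eq_left.2 hBT]⟩

lemma card_image_inter_le (𝒜 : Finset (Finset κ)) (T : Finset κ) :
    #(𝒜.image (T ∩ ·)) ≤ (#T + 1) ^ 𝒜.vcDim := by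
  refine (card_le_card_shatterer _).trans
    ((card_le_card fun B hB ↦ ?_).trans (card_filter_powerset_card_le T 𝒜.vcDim))
  obtain ⟨hBT, hB⟩ := subset_and_shatters_of_shatters_image_inter (mem_shatterer.1 hB)
  exact mem_filter.2 ⟨mem_powerset.2 hBT, hB.card_le_vcDim⟩

/-- The ordered pairs of distinct members of `𝒜` with the same trace on `T`. -/
def inseparablePairs (𝒜 : Finset (Finset κ)) (T : Finset κ) : Finset (Finset κ × Finset κ) :=
  {z ∈ 𝒜.offDiag | Disjoint T (z.1 ∆ z.2)}

lemma inseparablePairs_insert (𝒜 : Finset (Finset κ)) (S : κ) (T : Finset κ) :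
    inseparablePairs 𝒜 (insert S T) = {z ∈ inseparablePairs 𝒜 T | S ∉ z.1 ∆ z.2} := by
  simp only [inseparablePairs, disjoint_insert_left, filter_filter, and_comm]

lemma card_inseparablePairs_le (𝒜 : Finset (Finset κ)) (T : Finset κ) :
    #(inseparablePairs 𝒜 T) ≤ #𝒜 ^ 2 := by
  calc #(inseparablePairs 𝒜 T) ≤ #𝒜.offDiag := card_filter_le _ _
    _ ≤ #𝒜 ^ 2 := by rw [offDiag_card, sq]; exact Nat.sub_le _ _

lemma card_le_of_inseparablePairs_eq_empty {𝒜 : Finset (Finset κ)} {T : Finset κ}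
    (h : inseparablePairs 𝒜 T = ∅) : #𝒜 ≤ (#T + 1) ^ 𝒜.vcDim := by
  have hinj : Set.InjOn (T ∩ ·) (𝒜 : Set (Finset κ)) := by
    intro A hA B hB (hAB : T ∩ A = T ∩ B)
    by_contra hne
    have hdisj : Disjoint T (A ∆ B) := by
      rw [disjoint_iff, inf_symmDiff_distrib_left]
      exact symmDiff_eq_bot.2 hAB
    have hmem : (A, B) ∈ inseparablePairs 𝒜 T :=
      mem_filter.2 ⟨mem_offDiag.2 ⟨hA, hB, hne⟩, hdisj⟩
    exact notMem_empty _ (h ▸ hmem)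
  rw [← card_image_of_injOn hinj]
  exact card_image_inter_le 𝒜 T

variable [Fintype κ] {w : κ → ℝ}

lemma exists_mul_card_le_card_filter_mem {α : Type*} (hw : 0 ≤ w) {δ : ℝ} {U : Finset α}
    (hU : U.Nonempty) {D : α → Finset κ} (hD : ∀ z ∈ U, δ * ∑ S, w S < ∑ S ∈ D z, w S) :
    ∃ S, δ * #U ≤ #{z ∈ U | S ∈ D z} := by
  by_contra! hrare
  refine lt_irrefl (∑ _ ∈ U, δ * ∑ S, w S) ?_
  calc ∑ _ ∈ U, δ * ∑ S, w S < ∑ z ∈ U, ∑ S ∈ D z, w S := sum_lt_sum_of_nonempty hU hD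
    _ = ∑ S, ∑ z ∈ U with S ∈ D z, w S := sum_comm' (by simp)
    _ = ∑ S, #{z ∈ U | S ∈ D z} * w S := by simp only [sum_const, nsmul_eq_mul]
    _ ≤ ∑ S, δ * #U * w S :=
        sum_le_sum fun S _ ↦ mul_le_mul_of_nonneg_right (hrare S).le (hw S)
    _ = ∑ _ ∈ U, δ * ∑ S, w S := by rw [← mul_sum, sum_const, nsmul_eq_mul]; ring

lemma exists_card_inseparablePairs_le {𝒜 : Finset (Finset κ)} (hw : 0 ≤ w) {δ : ℝ} (hδ : δ ≤ 1)
    (hfar : ∀ z ∈ 𝒜.offDiag, δ * ∑ S, w S < ∑ S ∈ z.1 ∆ z.2, w S) (s : ℕ) :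
    ∃ T : Finset κ, #T ≤ s ∧ (#(inseparablePairs 𝒜 T) : ℝ) ≤ (1 - δ) ^ s * #𝒜 ^ 2 := by
  have : 0 ≤ 1 - δ := sub_nonneg.2 hδ
  induction s with
  | zero => exact ⟨∅, by simp, by simpa using mod_cast card_inseparablePairs_le 𝒜 ∅⟩
  | succ s ih =>
    obtain ⟨T, hT, hpairs⟩ := ih
    rcases (inseparablePairs 𝒜 T).eq_empty_or_nonempty with hempty | hne
    · exact ⟨T, by lia, by rw [hempty, card_empty, Nat.cast_zero]; positivity⟩
    obtain ⟨S, hS⟩ := exists_mul_card_le_card_filter_mem hw hne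
      fun z hz ↦ hfar z (mem_filter.1 hz).1
    refine ⟨insert S T, (card_insert_le _ _).trans (by lia), ?_⟩
    have hsplit : (#{z ∈ inseparablePairs 𝒜 T | S ∈ z.1 ∆ z.2} : ℝ) +
        #(inseparablePairs 𝒜 (insert S T)) = #(inseparablePairs 𝒜 T) := by
      rw [inseparablePairs_insert]
      exact_mod_cast card_filter_add_card_filter_not _
    calc (#(inseparablePairs 𝒜 (insert S T)) : ℝ) ≤ (1 - δ) * #(inseparablePairs 𝒜 T) := by
          linarith
      _ ≤ (1 - δ) * ((1 - δ) ^ s * #𝒜 ^ 2) := by gcongr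
      _ = (1 - δ) ^ (s + 1) * #𝒜 ^ 2 := by ring

lemma exists_sum_symmDiff_le_of_pow_lt_card {𝒜 : Finset (Finset κ)} (hw : 0 ≤ w) {δ : ℝ}
    (hδ : δ ≤ 1) {s : ℕ} (hs : (s + 1) ^ 𝒜.vcDim < #𝒜) (hδs : (1 - δ) ^ s * (#𝒜 : ℝ) ^ 2 < 1) :
    ∃ z ∈ 𝒜.offDiag, ∑ S ∈ z.1 ∆ z.2, w S ≤ δ * ∑ S, w S := by
  by_contra! hfar
  obtain ⟨T, hT, hpairs⟩ := exists_card_inseparablePairs_le hw hδ hfar s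
  have hempty : inseparablePairs 𝒜 T = ∅ := by
    rw [← card_eq_zero, ← Nat.lt_one_iff]
    exact_mod_cast hpairs.trans_lt hδs
  have hcard : #𝒜 ≤ (s + 1) ^ 𝒜.vcDim := by
    grw [← hT]
    exact card_le_of_inseparablePairs_eq_empty hempty
  exact hs.not_ge hcard

lemma exists_pow_lt_and_one_sub_pow_mul_sq_lt_one {d r : ℕ} (hd : d ≠ 0) (hr : r ≠ 0) {β K : ℝ}
    (hβ : 1 - 1 / (d : ℝ) < β) (hK : 4 + 4 / (β - (1 - 1 / (d : ℝ))) ≤ K)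
    (hlt : K * (r : ℝ) ^ (β - 1) < 1) :
    ∃ s : ℕ, (s + 1) ^ d < r ∧ (1 - K * (r : ℝ) ^ (β - 1)) ^ s * (r : ℝ) ^ 2 < 1 := by
  set ε := β - (1 - 1 / (d : ℝ)) with hε
  have hε0 : 0 < ε := sub_pos.2 hβ
  have hK4 : 4 ≤ K := by linarith [show 0 ≤ 4 / ε by positivity]
  have hr0 : (0 : ℝ) < r := by positivity
  have hr1 : (1 : ℝ) ≤ r := mod_cast Nat.one_le_iff_ne_zero.2 hr
  set y : ℝ := (r : ℝ) ^ (1 / (d : ℝ)) with hy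
  set δ : ℝ := K * (r : ℝ) ^ (β - 1) with hδ
  have hδy : δ * y = K * (r : ℝ) ^ ε := by
    rw [hδ, hy, mul_assoc, ← Real.rpow_add hr0, hε]; ring_nf
  have hrε : 1 ≤ (r : ℝ) ^ ε := Real.one_le_rpow hr1 hε0.le
  have hy4 : 4 < y := by nlinarith [show 0 < δ by positivity]
  have hyd : y ^ d = r := by
    rw [hy, one_div, Real.rpow_inv_natCast_pow hr0.le hd]
  obtain ⟨s, hsy, hys⟩ := exists_nat_add_one_lt_and_le_add_two (show 1 < y by linarith)
  have hsd : ((s : ℝ) + 1) ^ d < r := hyd ▸ pow_lt_pow_left₀ hsy (by positivity) hd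
  refine ⟨s, mod_cast hsd, one_sub_pow_mul_sq_lt_one hlt.le hr0 ?_⟩
  calc 2 * Real.log r ≤ 2 * ((r : ℝ) ^ ε / ε) := by
        gcongr; exact Real.log_le_rpow_div hr0.le hε0
    _ = 4 / ε / 2 * (r : ℝ) ^ ε := by ring
    _ < K / 2 * (r : ℝ) ^ ε := by gcongr; linarith
    _ = δ * (y / 2) := by linear_combination -hδy / 2
    _ ≤ δ * s := by gcongr; linarith

lemma exists_sum_symmDiff_le_rpow {d : ℕ} (hd : d ≠ 0) {β : ℝ} (hβ : 1 - 1 / (d : ℝ) < β) :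
    ∃ K : ℝ, 0 < K ∧ ∀ {κ : Type*} [Fintype κ] [DecidableEq κ] {𝒜 : Finset (Finset κ)},
      𝒜.vcDim ≤ d → 1 < #𝒜 → ∀ {w : κ → ℝ}, 0 ≤ w →
        ∃ z ∈ 𝒜.offDiag, ∑ S ∈ z.1 ∆ z.2, w S ≤ K * (#𝒜 : ℝ) ^ (β - 1) * ∑ S, w S := by
  refine ⟨4 + 4 / (β - (1 - 1 / (d : ℝ))), add_pos four_pos (div_pos four_pos (sub_pos.2 hβ)),
    fun {κ} _ _ {𝒜} hvc h𝒜 w hw ↦ ?_⟩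
  set δ := (4 + 4 / (β - (1 - 1 / (d : ℝ)))) * (#𝒜 : ℝ) ^ (β - 1)
  rcases le_or_gt 1 δ with hδ1 | hδ1
  · obtain ⟨A, hA, B, hB, hAB⟩ := one_lt_card.1 h𝒜
    refine ⟨(A, B), mem_offDiag.2 ⟨hA, hB, hAB⟩, ?_⟩
    calc ∑ S ∈ A ∆ B, w S ≤ ∑ S, w S :=
          sum_le_sum_of_subset_of_nonneg (subset_univ _) fun S _ _ ↦ hw S
      _ ≤ δ * ∑ S, w S := le_mul_of_one_le_left (sum_nonneg fun S _ ↦ hw S) hδ1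
  · obtain ⟨s, hs, hδs⟩ :=
      exists_pow_lt_and_one_sub_pow_mul_sq_lt_one hd (by lia) hβ le_rfl hδ1
    have hs' : (s + 1) ^ 𝒜.vcDim < #𝒜 := (Nat.pow_le_pow_right (by lia) hvc).trans_lt hs
    exact exists_sum_symmDiff_le_of_pow_lt_card hw hδ1.le hs' hδs

end Packing

/-! ### Orderings with few crossings -/

section Crossings

/-- The number of changes of value along the sequence `b, l₀, l₁, …`. -/
def alternations : Bool → List Bool → ℕ
  | _, [] => 0
  | b, a :: l => (if a = b then 0 else 1) + alternations a l

lemma alternations_le_length (b : Bool) (l : List Bool) : alternations b l ≤ l.length := by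
  induction l generalizing b with
  | nil => rfl
  | cons a l ih =>
    have := ih a
    rw [alternations, List.length_cons]
    split_ifs <;> lia

lemma alternations_insert_le (b : Bool) (l₁ l₂ : List Bool) (q p : Bool) :
    alternations b (l₁ ++ q :: p :: l₂) ≤
      alternations b (l₁ ++ q :: l₂) + if p = q then 0 else 2 := by
  induction l₁ generalizing b with
  | nil =>
    cases l₂ with
    | nil => cases p <;> cases q <;> simp [alternations]
    | cons a l => cases p <;> cases q <;> cases a <;> simp [alternations] <;> lia
  | cons a l ih =>
    have := ih a
    simp only [List.cons_append, alternations]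
    lia

-- The recursion on the first letter is that of Pascal's triangle.
lemma exists_finset_alternations_lt (n k : ℕ) (b : Bool) :
    ∃ 𝓛 : Finset (List Bool), #𝓛 < (n + 2) ^ k ∧
      ∀ l : List Bool, l.length ≤ n → alternations b l < k → l ∈ 𝓛 := by
  induction n generalizing k b with
  | zero =>
    obtain _ | k := k
    · exact ⟨∅, by simp, by simp⟩
    · exact ⟨{[]}, by simp, fun l hl _ ↦ by simpa using hl⟩
  | succ n ih =>
    obtain _ | k := k
    · exact ⟨∅, by simp, by simp⟩
    obtain ⟨𝓛, h𝓛, hmem⟩ := ih (k + 1) b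
    obtain ⟨𝓛', h𝓛', hmem'⟩ := ih k !b
    refine ⟨insert [] (𝓛.image (b :: ·) ∪ 𝓛'.image ((!b) :: ·)), ?_, fun l hl hk ↦ ?_⟩
    · calc #(insert [] (𝓛.image (b :: ·) ∪ 𝓛'.image ((!b) :: ·)))
          ≤ #𝓛 + #𝓛' + 1 := by grw [card_insert_le, card_union_le, card_image_le, card_image_le]
        _ < (n + 2) ^ (k + 1) + (n + 2) ^ k := by lia
        _ = (n + 3) * (n + 2) ^ k := by ring
        _ ≤ (n + 3) * (n + 3) ^ k := by gcongr; lia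
        _ = (n + 1 + 2) ^ (k + 1) := by ring
    obtain _ | ⟨a, l⟩ := l
    · exact mem_insert_self _ _
    rw [List.length_cons, Nat.add_le_add_iff_right] at hl
    rw [alternations] at hk
    refine mem_insert_of_mem (mem_union.2 ?_)
    rcases Bool.eq_or_eq_not a b with rfl | rfl
    · exact .inl (mem_image_of_mem _ (hmem l hl (by simpa using hk)))
    · exact .inr (mem_image_of_mem _ (hmem' l hl (by simpa [add_comm 1] using hk)))

variable {κ : Type*} [DecidableEq κ]

/-- The number of times the set of members containing `S` is entered or left along
the list `∅, L₀, L₁, …` of sets. -/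
def crossings (S : κ) (L : List (Finset κ)) : ℕ :=
  alternations false (L.map fun A ↦ decide (S ∈ A))

lemma crossings_insert_le (S : κ) (L₁ L₂ : List (Finset κ)) (A B : Finset κ) :
    crossings S (L₁ ++ B :: A :: L₂) ≤
      crossings S (L₁ ++ B :: L₂) + if S ∈ A ∆ B then 2 else 0 := by
  have h := alternations_insert_le false (L₁.map fun A ↦ decide (S ∈ A))
    (L₂.map fun A ↦ decide (S ∈ A)) (decide (S ∈ B)) (decide (S ∈ A))
  simp only [crossings, List.map_append, List.map_cons]
  refine h.trans_eq ?_
  by_cases hA : S ∈ A <;> by_cases hB : S ∈ B <;> simp [mem_symmDiff, hA, hB]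

variable [Fintype κ]

lemma sum_mul_two_pow_crossings_insert_le {w : κ → ℝ} (hw : 0 ≤ w) (L₁ L₂ : List (Finset κ))
    (A B : Finset κ) :
    ∑ S, w S * 2 ^ crossings S (L₁ ++ B :: A :: L₂) ≤
      ∑ S, w S * (if S ∈ A ∆ B then 4 else 1) * 2 ^ crossings S (L₁ ++ B :: L₂) := by
  refine sum_le_sum fun S _ ↦ ?_
  rw [mul_assoc]
  refine mul_le_mul_of_nonneg_left ?_ (hw S)
  calc (2 : ℝ) ^ crossings S (L₁ ++ B :: A :: L₂)
      ≤ 2 ^ (crossings S (L₁ ++ B :: L₂) + if S ∈ A ∆ B then 2 else 0) :=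
        pow_le_pow_right₀ one_le_two (crossings_insert_le S L₁ L₂ A B)
    _ = (if S ∈ A ∆ B then 4 else 1) * 2 ^ crossings S (L₁ ++ B :: L₂) := by
        rw [pow_add, mul_comm]
        split_ifs <;> norm_num

lemma sum_mul_ite_four_one (w : κ → ℝ) (D : Finset κ) :
    ∑ S, w S * (if S ∈ D then 4 else 1) = ∑ S, w S + 3 * ∑ S ∈ D, w S := by
  rw [← Fintype.sum_ite_mem D w, mul_sum, ← sum_add_distrib]
  refine sum_congr rfl fun S _ ↦ ?_
  split_ifs <;> ring

lemma sum_mul_two_pow_crossings_le_of_length_le_one {w : κ → ℝ} (hw : 0 ≤ w)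
    {L : List (Finset κ)} (hL : L.length ≤ 1) :
    ∑ S, w S * 2 ^ crossings S L ≤ 2 * ∑ S, w S := by
  rw [mul_sum]
  refine sum_le_sum fun S _ ↦ ?_
  have hcross : crossings S L ≤ 1 :=
    (alternations_le_length _ _).trans ((List.length_map _).trans_le hL)
  calc w S * 2 ^ crossings S L ≤ w S * 2 ^ 1 :=
        mul_le_mul_of_nonneg_left (pow_le_pow_right₀ one_le_two hcross) (hw S)
    _ = 2 * w S := by ring

/- Multiplicative weights: a close pair `A`, `B` is made consecutive, and the elements separating
it become four times as heavy for the ordering of the remaining sets. -/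
lemma exists_list_sum_two_pow_crossings_le {δ : ℕ → ℝ} (hδ : 0 ≤ δ) {𝒜 : Finset (Finset κ)}
    (hclose : ∀ ℬ ⊆ 𝒜, 1 < #ℬ → ∀ w : κ → ℝ, 0 ≤ w →
      ∃ z ∈ ℬ.offDiag, ∑ S ∈ z.1 ∆ z.2, w S ≤ δ #ℬ * ∑ S, w S)
    {w : κ → ℝ} (hw : 0 ≤ w) :
    ∃ L : List (Finset κ), L.length = #𝒜 ∧ (∀ A ∈ 𝒜, A ∈ L) ∧
      ∑ S, w S * 2 ^ crossings S L ≤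
        2 * Real.exp (3 * ∑ j ∈ range #𝒜, δ (j + 1)) * ∑ S, w S := by
  induction 𝒜 using Finset.strongInduction generalizing w with
  | H 𝒜 ih =>
  have hW : 0 ≤ ∑ S, w S := sum_nonneg fun S _ ↦ hw S
  rcases le_or_gt #𝒜 1 with hsmall | hlarge
  · refine ⟨𝒜.toList, length_toList 𝒜, fun A ↦ mem_toList.2, ?_⟩
    grw [sum_mul_two_pow_crossings_le_of_length_le_one hw ((length_toList 𝒜).trans_le hsmall),
      ← Real.one_le_exp (mul_nonneg zero_le_three (sum_nonneg fun j _ ↦ hδ (j + 1))), mul_one]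
  obtain ⟨⟨A, B⟩, hAB, hclose_AB⟩ := hclose 𝒜 subset_rfl hlarge w hw
  obtain ⟨hA, hB, hne⟩ := mem_offDiag.1 hAB
  rw [← card_erase_add_one hA] at hclose_AB ⊢
  set r := #(𝒜.erase A)
  obtain ⟨L, hlen, hmem, hsum⟩ := ih (𝒜.erase A) (erase_ssubset hA)
    (fun ℬ hℬ ↦ hclose ℬ (hℬ.trans (erase_subset A 𝒜)))
    (w := fun S ↦ w S * if S ∈ A ∆ B then 4 else 1)
    (fun S ↦ mul_nonneg (hw S) (by split_ifs <;> norm_num))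
  obtain ⟨L₁, L₂, rfl⟩ := List.append_of_mem (hmem B (mem_erase.2 ⟨hne.symm, hB⟩))
  refine ⟨L₁ ++ B :: A :: L₂, ?_, fun C hC ↦ ?_, ?_⟩
  · simpa only [List.length_append, List.length_cons, ← add_assoc] using congrArg (· + 1) hlen
  · have := hmem C
    simp only [mem_erase, List.mem_append, List.mem_cons] at this ⊢
    tauto
  calc ∑ S, w S * 2 ^ crossings S (L₁ ++ B :: A :: L₂)
      ≤ 2 * Real.exp (3 * ∑ j ∈ range r, δ (j + 1)) *
          ∑ S, w S * (if S ∈ A ∆ B then 4 else 1) :=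
        (sum_mul_two_pow_crossings_insert_le hw L₁ L₂ A B).trans hsum
    _ ≤ 2 * Real.exp (3 * ∑ j ∈ range r, δ (j + 1)) * ((3 * δ (r + 1) + 1) * ∑ S, w S) := by
        rw [sum_mul_ite_four_one]
        gcongr
        linarith
    _ ≤ 2 * Real.exp (3 * ∑ j ∈ range r, δ (j + 1)) *
          (Real.exp (3 * δ (r + 1)) * ∑ S, w S) := by
        gcongr
        exact Real.add_one_le_exp _
    _ = 2 * Real.exp (3 * ∑ j ∈ range (r + 1), δ (j + 1)) * ∑ S, w S := by
        rw [sum_range_succ, mul_add, Real.exp_add]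
        ring

lemma exists_list_two_pow_crossings_le {d : ℕ} (hd : d ≠ 0) {β : ℝ}
    (hβ : 1 - 1 / (d : ℝ) < β) (hβ1 : β ≤ 1) :
    ∃ K : ℝ, 0 < K ∧ ∀ {κ : Type*} [Fintype κ] [DecidableEq κ] {𝒜 : Finset (Finset κ)},
      𝒜.vcDim ≤ d → ∃ L : List (Finset κ), L.length = #𝒜 ∧ (∀ A ∈ 𝒜, A ∈ L) ∧
        ∀ S, (2 : ℝ) ^ crossings S L ≤
          2 * Real.exp (K * (#𝒜 : ℝ) ^ β) * Fintype.card κ := by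
  obtain ⟨K, hK, hclose⟩ := exists_sum_symmDiff_le_rpow hd hβ
  have hβ0 : 0 < β := (one_sub_one_div_natCast_nonneg d).trans_lt hβ
  refine ⟨3 * K / β, by positivity, fun {κ} _ _ {𝒜} hvc ↦ ?_⟩
  obtain ⟨L, hlen, hmem, hsum⟩ := exists_list_sum_two_pow_crossings_le (𝒜 := 𝒜) (w := 1)
    (δ := fun r ↦ K * (r : ℝ) ^ (β - 1)) (fun r ↦ by positivity)
    (fun ℬ hℬ hlarge w hw ↦ hclose ((vcDim_mono hℬ).trans hvc) hlarge hw) zero_le_one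
  refine ⟨L, hlen, hmem, fun S ↦ ?_⟩
  simp only [Pi.one_apply, one_mul, sum_const, card_univ, nsmul_one, ← mul_sum] at hsum
  calc (2 : ℝ) ^ crossings S L ≤ ∑ S, 2 ^ crossings S L :=
        single_le_sum (f := fun S ↦ (2 : ℝ) ^ crossings S L) (fun _ _ ↦ by positivity) (mem_univ S)
    _ ≤ _ := hsum
    _ ≤ 2 * Real.exp (3 * (K * ((#𝒜 : ℝ) ^ β / β))) * Fintype.card κ := by
        gcongr
        exact sum_natCast_rpow_sub_one_le hβ0 hβ1 _
    _ = 2 * Real.exp (3 * K / β * (#𝒜 : ℝ) ^ β) * Fintype.card κ := by ring_nf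

lemma exists_list_crossings_le_rpow {d : ℕ} (hd : d ≠ 0) {β : ℝ} (hβ : 1 - 1 / (d : ℝ) < β)
    (hβ1 : β ≤ 1) :
    ∃ K : ℝ, 0 < K ∧ ∀ {κ : Type*} [Fintype κ] [DecidableEq κ] {𝒜 : Finset (Finset κ)},
      𝒜.vcDim ≤ d → #𝒜 ≤ Fintype.card κ →
        ∃ L : List (Finset κ), L.length = #𝒜 ∧ (∀ A ∈ 𝒜, A ∈ L) ∧
          ∀ S, (crossings S L : ℝ) ≤ K * (Fintype.card κ : ℝ) ^ β := by
  obtain ⟨K, hK, hpow⟩ := exists_list_two_pow_crossings_le hd hβ hβ1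
  have hβ0 : 0 < β := (one_sub_one_div_natCast_nonneg d).trans_lt hβ
  refine ⟨1 + (K + 1 / β) / Real.log 2, by positivity, fun {κ} _ _ {𝒜} hvc hcard ↦ ?_⟩
  obtain ⟨L, hlen, hmem, hL⟩ := hpow hvc
  refine ⟨L, hlen, hmem, fun S ↦ natCast_le_mul_rpow_of_two_pow_le hβ0 ?_ ?_⟩
  · exact_mod_cast Fintype.card_pos_iff.2 ⟨S⟩
  · grw [hL S, hcard]

end Crossings

/-! ### Implicit representations -/

section Representations

variable {V : Type*}

/-- One symmetric decoder of pairs of `m`-bit labels serves all relations in `𝓡`: each of them is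
recovered from a suitable labelling. Unlike for graphs, the diagonal must be recovered as well. -/
def ImplicitlyRepresentable (m : ℕ) (𝓡 : Set (V → V → Prop)) : Prop :=
  ∃ G : (Fin m → Bool) → (Fin m → Bool) → Bool, (∀ a b, G a b = G b a) ∧
    ∀ r ∈ 𝓡, ∃ F : V → Fin m → Bool, ∀ i j, G (F i) (F j) = true ↔ r i j

lemma ImplicitlyRepresentable.mono {m : ℕ} {𝓡 𝓢 : Set (V → V → Prop)} (h : 𝓡 ⊆ 𝓢)
    (h𝓢 : ImplicitlyRepresentable m 𝓢) : ImplicitlyRepresentable m 𝓡 :=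
  let ⟨G, hG, hF⟩ := h𝓢
  ⟨G, hG, fun r hr ↦ hF r (h hr)⟩

lemma ImplicitlyRepresentable.of_card_le {Λ : Type*} [Fintype Λ] {m : ℕ}
    (hΛ : Fintype.card Λ ≤ 2 ^ m) {G : Λ → Λ → Prop}
    (hG : ∀ u v, G u v → G v u) {𝓡 : Set (V → V → Prop)}
    (h𝓡 : ∀ r ∈ 𝓡, ∃ F : V → Λ, ∀ i j, G (F i) (F j) ↔ r i j) :
    ImplicitlyRepresentable m 𝓡 := by
  classical
  obtain ⟨e⟩ : Nonempty (Λ ↪ (Fin m → Bool)) :=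
    Function.Embedding.nonempty_of_card_le (by simpa using hΛ)
  have : Std.Symm G := ⟨hG⟩
  refine ⟨fun a b ↦ decide (Relation.Map G e e a b), fun a b ↦ ?_, fun r hr ↦ ?_⟩
  · exact decide_eq_decide.2 (comm_of (Relation.Map G e e))
  · obtain ⟨F, hF⟩ := h𝓡 r hr
    refine ⟨e ∘ F, fun i j ↦ ?_⟩
    simp [Relation.map_apply, ← hF]

variable [Fintype V]

open Classical in
/-- The vertices related to `j`. -/
noncomputable def neighbors (r : V → V → Prop) (j : V) : Finset V := {i | r i j}

lemma mem_neighbors {r : V → V → Prop} {i j : V} : i ∈ neighbors r j ↔ r i j := by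
  simp [neighbors]

/-- The set system of all neighborhoods of a relation. -/
noncomputable def neighborhoods [DecidableEq V] (r : V → V → Prop) : Finset (Finset V) :=
  univ.image (neighbors r)

variable [DecidableEq V]

lemma neighbors_mem_neighborhoods (r : V → V → Prop) (j : V) :
    neighbors r j ∈ neighborhoods r :=
  mem_image_of_mem _ (mem_univ j)

lemma card_neighborhoods_le (r : V → V → Prop) : #(neighborhoods r) ≤ Fintype.card V :=
  card_image_le

lemma getD_map_idxOf_neighbors {r : V → V → Prop} {L : List (Finset V)} {j : V}
    (hj : neighbors r j ∈ L) (i : V) :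
    (L.map fun A ↦ decide (i ∈ A)).getD (L.idxOf (neighbors r j)) false = true ↔ r i j := by
  have hlt := List.idxOf_lt_length_of_mem hj
  rw [List.getD_eq_getElem _ _ (by simpa using hlt)]
  simp [mem_neighbors]

lemma implicitlyRepresentable_of_crossings_le {c m : ℕ}
    (hm : (Fintype.card V + 2) ^ (c + 2) ≤ 2 ^ m) {𝓡 : Set (V → V → Prop)}
    (hsymm : ∀ r ∈ 𝓡, Std.Symm r)
    (hL : ∀ r ∈ 𝓡, ∃ L : List (Finset V), L.length ≤ Fintype.card V ∧
      (∀ A ∈ neighborhoods r, A ∈ L) ∧ ∀ i, crossings i L ≤ c) :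
    ImplicitlyRepresentable m 𝓡 := by
  set n := Fintype.card V
  obtain ⟨𝓛, h𝓛, hmem𝓛⟩ := exists_finset_alternations_lt n (c + 1) false
  -- The label of a vertex: the position of its neighborhood in `L`, and its memberships along `L`.
  refine .of_card_le (Λ := Fin n × 𝓛) (le_trans ?_ hm)
    (G := fun u v ↦ u.2.1.getD v.1 false = true ∨ v.2.1.getD u.1 false = true)
    (fun _ _ ↦ Or.symm) fun r hr ↦ ?_
  · calc Fintype.card (Fin n × 𝓛) = n * #𝓛 := by simp
      _ ≤ (n + 2) * (n + 2) ^ (c + 1) := Nat.mul_le_mul (by lia) h𝓛.le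
      _ = (n + 2) ^ (c + 2) := by ring
  obtain ⟨L, hlen, hmem, hcross⟩ := hL r hr
  have hmemL (j : V) : neighbors r j ∈ L := hmem _ (neighbors_mem_neighborhoods r j)
  refine ⟨fun i ↦ (⟨L.idxOf (neighbors r i), (List.idxOf_lt_length_of_mem (hmemL i)).trans_le hlen⟩,
    ⟨L.map fun A ↦ decide (i ∈ A), hmem𝓛 _ ((List.length_map _).trans_le hlen)
      (Nat.lt_succ_of_le (hcross i))⟩), fun i j ↦ ?_⟩
  simp only [getD_map_idxOf_neighbors (hmemL _)]
  exact or_iff_left_of_imp fun h ↦ (hsymm r hr).symm _ _ h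

end Representations

lemma exists_implicitlyRepresentable_of_vcDim_le {d : ℕ} (hd : d ≠ 0) {β : ℝ}
    (hβ : 1 - 1 / (d : ℝ) < β) :
    ∃ C : ℝ, 0 < C ∧ ∀ {V : Type*} [Fintype V] [DecidableEq V] [Nonempty V],
      ∃ m : ℕ, (m : ℝ) ≤ C * (Fintype.card V : ℝ) ^ β ∧
        ImplicitlyRepresentable m
          {r : V → V → Prop | Std.Symm r ∧ (neighborhoods r).vcDim ≤ d} := by
  obtain ⟨γ, hγ, hγ'⟩ := exists_between (lt_min hβ (sub_lt_self 1 (by positivity)))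
  obtain ⟨hγβ, hγ1⟩ := lt_min_iff.1 hγ'
  have hγ0 : 0 < γ := (one_sub_one_div_natCast_nonneg d).trans_lt hγ
  obtain ⟨K, hK, hcross⟩ := exists_list_crossings_le_rpow hd hγ hγ1.le
  obtain ⟨K', hK', hclog⟩ := exists_natClog_add_two_le_rpow (sub_pos.2 hγβ)
  refine ⟨K' * (K + 2), by positivity, fun {V} _ _ _ ↦ ?_⟩
  set n := Fintype.card V
  have hn0 : n ≠ 0 := Fintype.card_ne_zero
  have hn1 : (1 : ℝ) ≤ n := mod_cast Nat.one_le_iff_ne_zero.2 hn0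
  set c := ⌊K * (n : ℝ) ^ γ⌋₊
  refine ⟨Nat.clog 2 (n + 2) * (c + 2), ?_, implicitlyRepresentable_of_crossings_le (c := c)
    ?_ (fun r hr ↦ hr.1) fun r hr ↦ ?_⟩
  · have hc : (c : ℝ) + 2 ≤ (K + 2) * (n : ℝ) ^ γ := by
      linarith [Nat.floor_le (show 0 ≤ K * (n : ℝ) ^ γ by positivity),
        Real.one_le_rpow hn1 hγ0.le]
    calc ((Nat.clog 2 (n + 2) * (c + 2) : ℕ) : ℝ)
        ≤ K' * (n : ℝ) ^ (β - γ) * ((K + 2) * (n : ℝ) ^ γ) := by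
          push_cast
          gcongr
          exact hclog n hn0
      _ = K' * (K + 2) * ((n : ℝ) ^ (β - γ) * (n : ℝ) ^ γ) := by ring
      _ = K' * (K + 2) * (n : ℝ) ^ β := by
          rw [← Real.rpow_add (by positivity), sub_add_cancel]
  · rw [pow_mul]
    gcongr
    exact Nat.le_pow_clog one_lt_two _
  · obtain ⟨L, hlen, hmem, hL⟩ := hcross hr.2 (card_neighborhoods_le r)
    exact ⟨L, hlen.trans_le (card_neighborhoods_le r), hmem, fun i ↦ Nat.le_floor (hL i)⟩

/-! ### Sign relations of bilinear forms -/

section BilinearForms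

variable {R V ι : Type*}

section Shattering

variable [CommRing R] [LinearOrder R] [IsStrictOrderedRing R] [AddCommGroup V] [Module R V]
  [DecidableEq ι] {𝒜 : Finset (Finset ι)} {A : Finset ι} {a : ι → V}

lemma nonneg_of_shatters_of_sum_smul_eq_zero
    (h𝒜 : ∀ T ∈ 𝒜, ∃ φ : Module.Dual R V, ∀ i, i ∈ T ↔ 0 ≤ φ (a i)) (hA : 𝒜.Shatters A)
    {g : ι → R} (hg : ∑ i ∈ A, g i • a i = 0) : ∀ i ∈ A, 0 ≤ g i := by
  obtain ⟨T, hT, hAT⟩ := hA (filter_subset (0 ≤ g ·) A)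
  obtain ⟨φ, hφ⟩ := h𝒜 T hT
  have hsign : ∀ i ∈ A, 0 ≤ φ (a i) ↔ 0 ≤ g i := fun i hi ↦ by
    simpa [hi, hφ] using congr(i ∈ $hAT)
  by_contra! ⟨k, hk, hgk⟩
  have hpos : 0 < ∑ i ∈ A, g i * φ (a i) := by
    refine sum_pos' (fun i hi ↦ ?_) ⟨k, hk, ?_⟩
    · rcases le_or_gt 0 (g i) with hgi | hgi
      · exact mul_nonneg hgi ((hsign i hi).2 hgi)
      · exact (mul_pos_of_neg_of_neg hgi (lt_iff_lt_of_le_iff_le (hsign i hi) |>.2 hgi)).le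
    · exact mul_pos_of_neg_of_neg hgk (lt_iff_lt_of_le_iff_le (hsign k hk) |>.2 hgk)
  have hzero : ∑ i ∈ A, g i * φ (a i) = 0 := by
    simpa only [map_sum, map_smul, smul_eq_mul, map_zero] using congr(φ $hg)
  exact hpos.ne' hzero

lemma linearIndepOn_of_shatters
    (h𝒜 : ∀ T ∈ 𝒜, ∃ φ : Module.Dual R V, ∀ i, i ∈ T ↔ 0 ≤ φ (a i)) (hA : 𝒜.Shatters A) :
    LinearIndepOn R a (A : Set ι) := by
  refine linearIndepOn_finset_iff.2 fun g hg i hi ↦ le_antisymm ?_ ?_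
  · have hneg : ∑ i ∈ A, (-g) i • a i = 0 := by
      simp only [Pi.neg_apply, neg_smul, sum_neg_distrib, hg, neg_zero]
    exact neg_nonneg.1 (nonneg_of_shatters_of_sum_smul_eq_zero h𝒜 hA hneg i hi)
  · exact nonneg_of_shatters_of_sum_smul_eq_zero h𝒜 hA hg i hi

lemma vcDim_le_finrank [Module.Finite R V]
    (h𝒜 : ∀ T ∈ 𝒜, ∃ φ : Module.Dual R V, ∀ i, i ∈ T ↔ 0 ≤ φ (a i)) :
    𝒜.vcDim ≤ Module.finrank R V :=
  Finset.sup_le fun A hA ↦ by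
    simpa using (linearIndepOn_of_shatters h𝒜 (mem_shatterer.1 hA)).fintype_card_le_finrank

end Shattering

/-- The relations `0 ≤ B (x i) (x j)` on `ι` arising from symmetric bilinear forms `B` on `V` and
families `x` of vectors. -/
def bilinearSignRelations (R V ι : Type*) [CommRing R] [LinearOrder R] [AddCommGroup V]
    [Module R V] : Set (ι → ι → Prop) :=
  {r | ∃ B : LinearMap.BilinForm R V, B.IsSymm ∧ ∃ x : ι → V, r = fun i j ↦ 0 ≤ B (x i) (x j)}

lemma bilinearSignRelations_subset [CommRing R] [LinearOrder R] [IsStrictOrderedRing R]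
    [AddCommGroup V] [Module R V] [Module.Finite R V] [Fintype ι] [DecidableEq ι] :
    bilinearSignRelations R V ι ⊆
      {r | Std.Symm r ∧ (neighborhoods r).vcDim ≤ Module.finrank R V} := by
  rintro _ ⟨B, hB, x, rfl⟩
  refine ⟨⟨fun i j h ↦ (hB.eq (x j) (x i)).symm ▸ h⟩, vcDim_le_finrank (a := x) fun T hT ↦ ?_⟩
  obtain ⟨j, -, rfl⟩ := mem_image.1 hT
  exact ⟨B.flip (x j), fun i ↦ mem_neighbors⟩

variable [Field R] [LinearOrder R] [IsStrictOrderedRing R] [AddCommGroup V] [Module R V]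

lemma implicitlyRepresentable_bilinearSignRelations_of_finrank_eq_one
    (hV : Module.finrank R V = 1) :
    ImplicitlyRepresentable 4 (bilinearSignRelations R V ι) := by
  obtain ⟨e, -, he⟩ := finrank_eq_one_iff'.1 hV
  refine .of_card_le (Λ := SignType × SignType) (by decide)
    (G := fun u v ↦ 0 ≤ u.1 * v.2 ∧ 0 ≤ v.1 * u.2) (fun _ _ ↦ And.symm) ?_
  rintro _ ⟨B, -, x, rfl⟩
  choose c hc using fun i ↦ he (x i)
  refine ⟨fun i ↦ (SignType.sign (c i), SignType.sign (c i * B e e)), fun i j ↦ ?_⟩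
  simp only [← sign_mul, sign_nonneg_iff, ← hc, map_smul, LinearMap.smul_apply, smul_eq_mul]
  rw [mul_left_comm (c j), mul_left_comm (c i) (c j), and_self]

end BilinearForms

end ImplicitRepresentation

open ImplicitRepresentation in
theorem bilinear_form_implicit_representation_general (R V : Type*) [Field R] [LinearOrder R]
    [IsStrictOrderedRing R] [AddCommGroup V] [Module R V] [FiniteDimensional R V] [Nontrivial V] :
    ∃ C : ℝ, 0 < C ∧ ∀ (ι : Type*) [Fintype ι] [Nonempty ι], ∃ m : ℕ,
      (m : ℝ) ≤ C * (Fintype.card ι : ℝ) ^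
        (Real.logb 2 (2 ^ Module.finrank R V - 1) / Module.finrank R V) ∧
      ImplicitlyRepresentable m (bilinearSignRelations R V ι) := by
  classical
  have hV : 0 < Module.finrank R V := Module.finrank_pos
  obtain hV1 | hV2 : Module.finrank R V = 1 ∨ 2 ≤ Module.finrank R V := by lia
  · refine ⟨4, by positivity, fun ι _ _ ↦
      ⟨4, ?_, implicitlyRepresentable_bilinearSignRelations_of_finrank_eq_one hV1⟩⟩
    norm_num [hV1]
  · obtain ⟨C, hC, hrep⟩ := exists_implicitlyRepresentable_of_vcDim_le hV.ne'
      (one_sub_one_div_lt_logb_two_pow_sub_one_div hV2)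
    refine ⟨C, hC, fun ι _ _ ↦ ?_⟩
    obtain ⟨m, hm, h⟩ := hrep (V := ι)
    exact ⟨m, hm, h.mono bilinearSignRelations_subset⟩

/-- For a symmetric `Q × Q` real matrix `M`, the graphs on points `x_1, …, x_n ∈ ℝ^Q` whose
edges are the pairs with `x_iᵀ M x_j ≥ 0` admit implicit representations with
`m ≤ C·n^{log₂(2^Q−1)/Q}` bits per vertex. -/
theorem bilinear_form_implicit_representation (Q : ℕ) (hQ : 1 ≤ Q)
    (M : Matrix (Fin Q) (Fin Q) ℝ) (hM : M.IsSymm) :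
    ∃ C : ℝ, 0 < C ∧ ∀ n : ℕ, 2 ≤ n →
      ∃ m : ℕ, (m : ℝ) ≤ C * (n : ℝ) ^ (Real.logb 2 ((2 : ℝ) ^ Q - 1) / Q) ∧
        ∃ G : (Fin m → Bool) → (Fin m → Bool) → Bool,
          (∀ a b, G a b = G b a) ∧
          ∀ x : Fin n → (Fin Q → ℝ),
            ∃ F : Fin n → (Fin m → Bool),
              ∀ i j : Fin n, i ≠ j →
                (G (F i) (F j) = true ↔ 0 ≤ x i ⬝ᵥ M.mulVec (x j)) := by
  have : Nonempty (Fin Q) := ⟨0, hQ⟩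
  obtain ⟨C, hC, hrep⟩ := bilinear_form_implicit_representation_general ℝ (Fin Q → ℝ)
  refine ⟨C, hC, fun n hn ↦ ?_⟩
  have : Nonempty (Fin n) := ⟨0, by lia⟩
  obtain ⟨m, hm, G, hG, hF⟩ := hrep (Fin n)
  refine ⟨m, by simpa using hm, G, hG, fun x ↦ ?_⟩
  obtain ⟨F, hF⟩ := hF _ ⟨M.toBilin', isSymm_toBilin'_iff_isSymm.2 hM, x, rfl⟩
  exact ⟨F, fun i j _ ↦ by simpa only [toBilin'_apply'] using hF i j⟩
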